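/- arXiv:2404.13620 — 4 statements merged into one kernel-verified Lean document; each statement's English description precedes it below -/
import Mathlib

section
/- If in addition α₁ ≤ A for a real number A ≥ 1, then α₁(α₁² − 3α₂²)/s³ − μ·α₁/(s·ε₂) ≥ (14/51)·(9/10)³·(1/A³). (Here α₁(α₁² − 3α₂²)/s³ equals Re(1/σ³) for σ = α₁ + iα₂.) -/
/-- With `μ = 1/2`, `α₁ ≥ 1`, `0 ≤ α₂ ≤ α₁/3`, `s = α₁² + α₂²`,
`ε₂ = (1/2)(s/μ + μ s²/(α₁² − 3α₂²))`, and additionally `α₁ ≤ A` with `A ≥ 1`: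
`α₁(α₁² − 3α₂²)/s³ − μ α₁/(s ε₂) ≥ (14/51)(9/10)³(1/A³)`. -/
theorem garding_coefficient_lower_bound_two
    (μ α₁ α₂ s ε₂ A : ℝ) (hμ : μ = 1 / 2) (hα₁ : 1 ≤ α₁)
    (hα₂0 : 0 ≤ α₂) (hα₂ : α₂ ≤ α₁ / 3)
    (hs : s = α₁ ^ 2 + α₂ ^ 2)
    (hε₂ : ε₂ = (1 / 2) * (s / μ + μ * s ^ 2 / (α₁ ^ 2 - 3 * α₂ ^ 2)))
    (hA : 1 ≤ A) (hα₁A : α₁ ≤ A) :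
    (14 / 51) * (9 / 10) ^ 3 * (1 / A ^ 3) ≤
      α₁ * (α₁ ^ 2 - 3 * α₂ ^ 2) / s ^ 3 - μ * α₁ / (s * ε₂) := by
  have ha : 0 < α₁ := by linarith
  have hb : 9 * α₂ ^ 2 ≤ α₁ ^ 2 := by nlinarith
  have ha2 : 0 < α₁ ^ 2 := by positivity
  obtain ⟨d, hd⟩ : ∃ d, d = α₁ ^ 2 - 3 * α₂ ^ 2 := ⟨_, rfl⟩
  rw [← hd] at hε₂ ⊢
  have hd1 : 2 / 3 * α₁ ^ 2 ≤ d := by linarith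
  have hs1 : s ≤ 10 / 9 * α₁ ^ 2 := by linarith
  have hdpos : 0 < d := by linarith
  have hspos : 0 < s := by nlinarith [sq_nonneg α₂]
  have hq : 0 < 4 * d + s := by linarith
  have hε : ε₂ = s * (4 * d + s) / (4 * d) := by
    rw [hε₂, hμ]; field_simp; ring
  have key : α₁ * d / s ^ 3 - μ * α₁ / (s * ε₂)
      = α₁ * d / s ^ 3 * ((4 * d - s) / (4 * d + s)) := by
    rw [hε, hμ]; field_simp; ring
  rw [key]
  have h1 : 7 / 17 ≤ (4 * d - s) / (4 * d + s) := by
    rw [le_div_iff₀ hq]; linarith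
  have h2 : 2 / 3 * (9 / 10) ^ 3 * (1 / α₁ ^ 3) ≤ α₁ * d / s ^ 3 := by
    have e : 2 / 3 * (9 / 10) ^ 3 * (1 / α₁ ^ 3)
        = α₁ * (2 / 3 * α₁ ^ 2) / (10 / 9 * α₁ ^ 2) ^ 3 := by
      field_simp
    rw [e]
    gcongr
  have h3 : 1 / A ^ 3 ≤ 1 / α₁ ^ 3 := by gcongr
  calc (14 / 51) * (9 / 10) ^ 3 * (1 / A ^ 3)
      ≤ (14 / 51) * (9 / 10) ^ 3 * (1 / α₁ ^ 3) := by gcongr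
    _ = 2 / 3 * (9 / 10) ^ 3 * (1 / α₁ ^ 3) * (7 / 17) := by ring
    _ ≤ _ := by gcongr
end

section
/- Define f : ℝ → ℝ by f(t) = 2e^{2t} − e^{4t} + 4t²e^{2t} − 1. Then f(t) < 0 for every real t ≠ 0 (and f(0) = 0). In particular, for any h > 0 and any nonzero real α, the quantity Λ(α) = 2e^{2αh} − e^{4αh} + 4α²h²e^{2αh} − 1 is nonzero. -/
/-- The determinant-type function `f(t) = 2e^{2t} − e^{4t} + 4t²e^{2t} − 1` vanishes at
`t = 0` and is negative for every `t ≠ 0`; in particular, for any `h > 0` and nonzero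
real `α`, the quantity `Λ(α) = 2e^{2αh} − e^{4αh} + 4α²h²e^{2αh} − 1` is nonzero. -/
theorem determinant_function_negative
    (f : ℝ → ℝ)
    (hf : f = fun t => 2 * Real.exp (2 * t) - Real.exp (4 * t)
      + 4 * t ^ 2 * Real.exp (2 * t) - 1) :
    (∀ t : ℝ, t ≠ 0 → f t < 0) ∧ f 0 = 0 ∧
    (∀ h α : ℝ, 0 < h → α ≠ 0 →
      2 * Real.exp (2 * α * h) - Real.exp (4 * α * h)
        + 4 * α ^ 2 * h ^ 2 * Real.exp (2 * α * h) - 1 ≠ 0) := by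
  have key : ∀ t : ℝ, t ≠ 0 → f t < 0 := by
    intro t ht
    have hs : t ^ 2 < Real.sinh t ^ 2 := by
      rcases lt_or_gt_of_ne ht with h | h
      · have := Real.sinh_lt_self_iff.2 h
        nlinarith
      · have := Real.self_lt_sinh_iff.2 h
        nlinarith
    have h2 : Real.exp (2 * t) = Real.exp t ^ 2 := by
      rw [← Real.exp_nat_mul]; norm_num
    have h4 : Real.exp (4 * t) = Real.exp t ^ 4 := by
      rw [← Real.exp_nat_mul]; norm_num
    have he : f t = 4 * Real.exp t ^ 2 * (t ^ 2 - Real.sinh t ^ 2) := by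
      rw [hf, Real.sinh_eq, Real.exp_neg]
      simp only [h2, h4]
      have := (Real.exp_pos t).ne'
      field_simp
      ring
    rw [he]
    exact mul_neg_of_pos_of_neg (by positivity) (by linarith)
  refine ⟨key, by simp [hf]; norm_num, ?_⟩
  intro h α hh hα
  have := (key (α * h) (mul_ne_zero hα hh.ne')).ne
  rw [hf] at this
  simpa only [mul_pow, mul_assoc] using this
end

section
/- Define f : ℝ → ℝ by f(t) = 2e^{2t} − e^{4t} + 4t²e^{2t} − 1. For every t₀ > 0 there exists a constant c > 0 such that |f(t)| ≥ c·e^{4t} for all t ≥ t₀, and |f(t)| ≥ c for all t ≤ −t₀. -/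
/-- The first factor of `-f(t) e^{-4t}` is monotone. -/
lemma factor_monotone :
    Monotone (fun t : ℝ => 1 - Real.exp (-t) ^ 2 - 2 * t * Real.exp (-t)) := by
  have hd : ∀ t : ℝ, HasDerivAt (fun t : ℝ => 1 - Real.exp (-t) ^ 2 - 2 * t * Real.exp (-t))
      (2 * Real.exp (-t) * (Real.exp (-t) - 1 + t)) t := by
    intro t
    have h1 : HasDerivAt (fun t : ℝ => Real.exp (-t)) (Real.exp (-t) * (-1)) t :=
      (hasDerivAt_id t).neg.exp
    have h2 : HasDerivAt (fun t : ℝ => 2 * t) (2 * 1) t := (hasDerivAt_id t).const_mul 2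
    refine (((h1.pow 2).const_sub 1).sub (h2.mul h1)).congr_deriv ?_
    norm_num
    ring
  refine monotone_of_deriv_nonneg (fun t => (hd t).differentiableAt) (fun t => ?_)
  rw [(hd t).deriv]
  have := Real.add_one_le_exp (-t)
  exact mul_nonneg (by positivity) (by linarith)

lemma factor_pos {t : ℝ} (ht : 0 < t) :
    0 < 1 - Real.exp (-t) ^ 2 - 2 * t * Real.exp (-t) := by
  have h := Real.self_lt_sinh_iff.2 ht
  rw [Real.sinh_eq] at h
  have he := Real.exp_pos (-t)
  have hm : Real.exp t * Real.exp (-t) = 1 := by rw [← Real.exp_add]; simp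
  nlinarith [mul_pos he (sub_pos.2 h)]

lemma product_bound {t₀ t : ℝ} (h0 : 0 < t₀) (h : t₀ ≤ t) :
    (1 - Real.exp (-t₀) ^ 2 - 2 * t₀ * Real.exp (-t₀)) ^ 2 ≤
      (1 - Real.exp (-t) ^ 2) ^ 2 - (2 * t * Real.exp (-t)) ^ 2 := by
  have hp := factor_pos h0
  have hm : 1 - Real.exp (-t₀) ^ 2 - 2 * t₀ * Real.exp (-t₀) ≤
    1 - Real.exp (-t) ^ 2 - 2 * t * Real.exp (-t) := factor_monotone h
  have hq : 0 ≤ 2 * t * Real.exp (-t) := by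
    have : 0 < t := by linarith
    positivity
  rw [sq_sub_sq, sq]
  exact mul_le_mul (by linarith) hm hp.le (by linarith)

/-- Quantitative lower bounds for `f(t) = 2e^{2t} − e^{4t} + 4t²e^{2t} − 1`:
for every `t₀ > 0` there is `c > 0` with `|f(t)| ≥ c e^{4t}` for `t ≥ t₀` and
`|f(t)| ≥ c` for `t ≤ −t₀`. -/
theorem determinant_function_lower_bounds
    (f : ℝ → ℝ)
    (hf : f = fun t => 2 * Real.exp (2 * t) - Real.exp (4 * t)
      + 4 * t ^ 2 * Real.exp (2 * t) - 1) :
    ∀ t₀ : ℝ, 0 < t₀ → ∃ c > 0,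
      (∀ t : ℝ, t₀ ≤ t → c * Real.exp (4 * t) ≤ |f t|) ∧
      (∀ t : ℝ, t ≤ -t₀ → c ≤ |f t|) := by
  subst hf
  intro t₀ h0
  refine ⟨_, pow_pos (factor_pos h0) 2, fun t ht => ?_, fun t ht => ?_⟩
  · have h := mul_le_mul_of_nonneg_right (product_bound h0 ht) (Real.exp_pos (4 * t)).le
    refine h.trans (le_trans (le_of_eq ?_) (neg_le_abs _))
    have h2 : Real.exp (2 * t) = Real.exp t ^ 2 := by rw [← Real.exp_nat_mul]; norm_num
    have h4 : Real.exp (4 * t) = Real.exp t ^ 4 := by rw [← Real.exp_nat_mul]; norm_num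
    beta_reduce
    rw [h2, h4, Real.exp_neg]
    have := (Real.exp_pos t).ne'
    field_simp
    ring
  · have h := product_bound h0 (show t₀ ≤ -t by linarith)
    refine h.trans (le_trans (le_of_eq ?_) (neg_le_abs _))
    have h2 : Real.exp (2 * t) = Real.exp t ^ 2 := by rw [← Real.exp_nat_mul]; norm_num
    have h4 : Real.exp (4 * t) = Real.exp t ^ 4 := by rw [← Real.exp_nat_mul]; norm_num
    beta_reduce
    rw [h2, h4, neg_neg]
    ring
end

section
/- The function u_α is a solution of the fourth-order ordinary differential equation u⁗(y) − 2α²·u''(y) + α⁴·u(y) = 0 for all y ∈ ℝ, and it satisfies the boundary conditions u_α(0) = 0, u_α'(0) = 0, u_α(h) = 0, and u_α'(h) = φ. -/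
/-- The per-mode biharmonic extension
`u_α(y) = C₁e^{αy} + C₂ y e^{αy} + C₃ e^{−αy} + C₄ y e^{−αy}` with the coefficients
determined by the boundary conditions `u(0) = u'(0) = u(h) = 0`, `u'(h) = φ`. -/
noncomputable def uAux (h α : ℝ) (φ : ℂ) (y : ℝ) : ℂ :=
  let Λα : ℝ := 2 * Real.exp (2 * α * h) - Real.exp (4 * α * h)
    + 4 * α ^ 2 * h ^ 2 * Real.exp (2 * α * h) - 1
  let C₁ : ℂ := φ * (h : ℂ) * (Real.exp (α * h) : ℂ) * ((Real.exp (2 * α * h) : ℂ) - 1) / (Λα : ℂ)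
  let C₂ : ℂ := φ * (Real.exp (α * h) : ℂ) *
    ((2 * α * h : ℝ) - (Real.exp (2 * α * h) : ℂ) + 1) / (Λα : ℂ)
  let C₃ : ℂ := -(φ * (h : ℂ) * (Real.exp (α * h) : ℂ) * ((Real.exp (2 * α * h) : ℂ) - 1) / (Λα : ℂ))
  let C₄ : ℂ := -(φ * (Real.exp (α * h) : ℂ) *
    ((2 * α * h : ℝ) * (Real.exp (2 * α * h) : ℂ) - (Real.exp (2 * α * h) : ℂ) + 1) / (Λα : ℂ))
  C₁ * (Real.exp (α * y) : ℂ) + C₂ * (y : ℂ) * (Real.exp (α * y) : ℂ)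
    + C₃ * (Real.exp (-(α * y)) : ℂ) + C₄ * (y : ℂ) * (Real.exp (-(α * y)) : ℂ)

/-- General combination of the four basis solutions. -/
noncomputable def genF (α : ℝ) (A B C D : ℂ) (y : ℝ) : ℂ :=
  A * (Real.exp (α * y) : ℂ) + B * (y : ℂ) * (Real.exp (α * y) : ℂ)
    + C * (Real.exp (-(α * y)) : ℂ) + D * (y : ℂ) * (Real.exp (-(α * y)) : ℂ)

theorem genF_deriv (α : ℝ) (A B C D : ℂ) :
    deriv (genF α A B C D) = genF α (α * A + B) (α * B) (-α * C + D) (-α * D) := by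
  funext y
  have hy : HasDerivAt (fun y : ℝ => (y : ℂ)) 1 y := by
    simpa using (hasDerivAt_id y).ofReal_comp
  have hl : HasDerivAt (fun y : ℝ => α * y) α y := by
    simpa using (hasDerivAt_id y).const_mul α
  have h1 := hl.exp.ofReal_comp
  have h2 := hl.neg.exp.ofReal_comp
  have key := (((h1.const_mul A).add ((hy.const_mul B).mul h1)).add (h2.const_mul C)).add
    ((hy.const_mul D).mul h2)
  have key2 : HasDerivAt (genF α A B C D) _ y := key
  rw [key2.deriv]
  simp only [genF, Pi.neg_apply]
  push_cast
  ring

theorem lam_ne (h α : ℝ) (hh : 0 < h) (hα : α ≠ 0) :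
    2 * Real.exp (2 * α * h) - Real.exp (4 * α * h)
    + 4 * α ^ 2 * h ^ 2 * Real.exp (2 * α * h) - 1 ≠ 0 := by
  have e2 : Real.exp (2 * α * h) = Real.exp (α * h) ^ 2 := by
    rw [← Real.exp_nat_mul]; congr 1; push_cast; ring
  have e4 : Real.exp (4 * α * h) = Real.exp (α * h) ^ 4 := by
    rw [← Real.exp_nat_mul]; congr 1; push_cast; ring
  have ha : α * h ≠ 0 := mul_ne_zero hα hh.ne'
  have hE := Real.exp_pos (α * h)
  have hs : Real.exp (α * h) ^ 2 - 1 = 2 * Real.exp (α * h) * Real.sinh (α * h) := by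
    rw [Real.sinh_eq, Real.exp_neg]; field_simp
  have hfac : 2 * Real.exp (2 * α * h) - Real.exp (4 * α * h)
    + 4 * α ^ 2 * h ^ 2 * Real.exp (2 * α * h) - 1
      = 4 * Real.exp (α * h) ^ 2 * ((α * h - Real.sinh (α * h)) * (α * h + Real.sinh (α * h))) := by
    rw [e2, e4]
    linear_combination (-(Real.exp (α * h) ^ 2 - 1)
      - 2 * Real.exp (α * h) * Real.sinh (α * h)) * hs
  rw [hfac]
  refine mul_ne_zero (by positivity) (mul_ne_zero ?_ ?_)
  · rcases lt_or_gt_of_ne ha with h0 | h0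
    · have := Real.sinh_lt_self_iff.2 h0
      linarith
    · have := Real.self_lt_sinh_iff.2 h0
      linarith
  · rcases lt_or_gt_of_ne ha with h0 | h0
    · have := Real.sinh_lt_self_iff.2 h0
      linarith
    · have := Real.self_lt_sinh_iff.2 h0
      linarith

/-- `u_α` solves `u⁗ − 2α²u'' + α⁴u = 0` on `ℝ` with boundary values
`u(0) = 0`, `u'(0) = 0`, `u(h) = 0`, `u'(h) = φ`. -/
theorem uAux_solves_ode_and_bc (h α : ℝ) (φ : ℂ) (hh : 0 < h) (hα : α ≠ 0) :
    (∀ y : ℝ, iteratedDeriv 4 (uAux h α φ) y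
        - 2 * (α : ℂ) ^ 2 * iteratedDeriv 2 (uAux h α φ) y
        + (α : ℂ) ^ 4 * uAux h α φ y = 0) ∧
    uAux h α φ 0 = 0 ∧ deriv (uAux h α φ) 0 = 0 ∧
    uAux h α φ h = 0 ∧ deriv (uAux h α φ) h = φ := by
  have hL := lam_ne h α hh hα
  have e2 : Real.exp (2 * α * h) = Real.exp (α * h) ^ 2 := by
    rw [← Real.exp_nat_mul]; congr 1; push_cast; ring
  have e4 : Real.exp (4 * α * h) = Real.exp (α * h) ^ 4 := by
    rw [← Real.exp_nat_mul]; congr 1; push_cast; ring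
  have hE : (Real.exp (α * h) : ℂ) ≠ 0 := by
    exact_mod_cast (Real.exp_pos (α * h)).ne'
  obtain ⟨A, B, C, D, hu, hA, hB, hC, hD⟩ : ∃ A B C D : ℂ, uAux h α φ = genF α A B C D ∧
      A = _ ∧ B = _ ∧ C = _ ∧ D = _ :=
    ⟨_, _, _, _, rfl, rfl, rfl, rfl, rfl⟩
  have hLC := Complex.ofReal_ne_zero.2 hL
  rw [e2, e4] at hA hB hC hD hLC
  rw [hu]
  refine ⟨fun y => ?_, ?_, ?_, ?_, ?_⟩
  · simp only [iteratedDeriv_succ, iteratedDeriv_zero, genF_deriv]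
    simp only [genF]
    ring
  · simp only [genF, hA, hC]
    simp
  · rw [genF_deriv]
    simp only [genF, hA, hB, hC, hD]
    simp only [mul_zero, neg_zero, Real.exp_zero, Complex.ofReal_zero, Complex.ofReal_one]
    push_cast
    ring
  · simp only [genF, hA, hB, hC, hD, Real.exp_neg]
    generalize Real.exp (α * h) = E at *
    push_cast at hLC ⊢
    field_simp
    ring
  · rw [genF_deriv]
    simp only [genF, hA, hB, hC, hD, Real.exp_neg]
    generalize Real.exp (α * h) = E at *
    push_cast at hLC ⊢
    generalize hM : 2 * (E : ℂ) ^ 2 - (E : ℂ) ^ 4 + 4 * (α : ℂ) ^ 2 * (h : ℂ) ^ 2 * (E : ℂ) ^ 2 - 1 = M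
      at hLC ⊢
    field_simp
    rw [← hM]
    ring
end
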